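/- arXiv:1005.1902 — 2 statements merged into one kernel-verified Lean document; each statement's English description precedes it below -/
import Mathlib

section
/- Let 𝒢 be an infinite connected bipartite graph of bounded valance with bipartition 𝒱_𝒢 = 𝒜 ⊔ ℬ, and let ℋ be an infinite connected subgraph of 𝒢, equipped with the induced bipartition. Let ⟨g_i⟩ be any geodesic ray in F₂. Then for every vertex v of ℋ, every vertex w of ℋ, and every i ≥ 0, |Υ_ℋ^{g_i}(e_v)(w)| ≤ |Υ_𝒢^{g_i}(e_v)(w)|, where e_v denotes the function assigning 1 to v and 0 to every other vertex, and Υ_ℋ, Υ_𝒢 denote the actions of F₂ on ℝ^{𝒱_ℋ} and ℝ^{𝒱_𝒢} associated to ℋ and 𝒢 respectively. -/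
noncomputable section

abbrev F2 := FreeGroup Bool

def gh : F2 := FreeGroup.of true
def gv : F2 := FreeGroup.of false

def hmat (l : ℝ) : Matrix.SpecialLinearGroup (Fin 2) ℝ :=
  ⟨!![1, l; 0, 1], by norm_num [Matrix.det_fin_two_of]⟩

def vmat (l : ℝ) : Matrix.SpecialLinearGroup (Fin 2) ℝ :=
  ⟨!![1, 0; l, 1], by norm_num [Matrix.det_fin_two_of]⟩

def rho (l : ℝ) : F2 →* Matrix.SpecialLinearGroup (Fin 2) ℝ :=
  FreeGroup.lift fun b => if b then hmat l else vmat l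

def act (l : ℝ) (g : F2) (x : Fin 2 → ℝ) : Fin 2 → ℝ :=
  (rho l g).val.mulVec x

def nrm (x : Fin 2 → ℝ) : ℝ := Real.sqrt (x 0 ^ 2 + x 1 ^ 2)

def Circ : Set (Fin 2 → ℝ) := {x | nrm x = 1}

def gens : Set F2 := {gh, gv, gh⁻¹, gv⁻¹}

def ShrinkSet (l : ℝ) (g : F2) : Set (Fin 2 → ℝ) :=
  {x | x ∈ Circ ∧ nrm (act l g x) < 1}

def ExpSet (l : ℝ) (g : F2) : Set (Fin 2 → ℝ) :=
  {x | x ∈ Circ ∧ 1 < nrm (act l g x)}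

def IsGeodesicRay (g : ℕ → F2) : Prop :=
  g 0 = 1 ∧ (∀ n, g (n + 1) * (g n)⁻¹ ∈ gens) ∧ ∀ n, g (n + 2) * (g n)⁻¹ ≠ 1

def IsGeodesicSegment (g : ℕ → F2) (N : ℕ) : Prop :=
  g 0 = 1 ∧ (∀ n, n + 1 ≤ N → g (n + 1) * (g n)⁻¹ ∈ gens) ∧
    ∀ n, n + 2 ≤ N → g (n + 2) * (g n)⁻¹ ≠ 1

def IsShrinkingSeq (l : ℝ) (g : ℕ → F2) (θ : Fin 2 → ℝ) : Prop :=
  ∀ ε : ℝ, 0 < ε → ∃ i : ℕ, nrm (act l (g i) θ) < ε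

def Shrinkable (l : ℝ) (θ : Fin 2 → ℝ) : Prop :=
  ∀ ε : ℝ, 0 < ε → ∃ g : F2, nrm (act l g θ) < ε

def Renormalizable (l : ℝ) (θ : Fin 2 → ℝ) : Prop :=
  Shrinkable l θ ∧ ∀ k : F2, ∀ c : ℝ, act l (k * (gh * gv⁻¹) * k⁻¹) θ ≠ c • θ

abbrev SP := Bool × Bool

def Quad (s : SP) : Set (Fin 2 → ℝ) :=
  {x | (if s.1 then 0 < x 0 else x 0 < 0) ∧ (if s.2 then 0 < x 1 else x 1 < 0)}

def letterSigma : Bool × Bool → SP → SP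
  | (true, true), s => (s.2, s.2)
  | (false, true), s => (s.1, s.1)
  | (true, false), s => (!s.2, s.2)
  | (false, false), s => (s.1, !s.1)

def SigmaAct (g : F2) : SP → SP :=
  (FreeGroup.toWord g).foldr (fun w acc => letterSigma w ∘ acc) id

def gammaAut : F2 →* F2 := FreeGroup.lift fun b => if b then gv⁻¹ else gh⁻¹

def rPerm (s : SP) : SP := (!s.2, s.1)

def rPermInv (s : SP) : SP := (s.2, !s.1)

def shiftRay (g : ℕ → F2) : ℕ → F2 := fun n => g (n + 1) * (g 1)⁻¹

def TailEquiv (g g' : ℕ → F2) : Prop :=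
  ∃ m n : ℕ, shiftRay^[m] g = shiftRay^[n] g'

def seqPow (a : F2) : ℕ → F2 := fun n => a ^ n

def seqPer (a b : F2) : ℕ → F2 := fun n =>
  if n % 2 = 0 then (b * a) ^ (n / 2) else a * (b * a) ^ (n / 2)

def Cond1 (g : ℕ → F2) : Prop :=
  ¬ TailEquiv g (seqPow gh) ∧ ¬ TailEquiv g (seqPow gh⁻¹) ∧
    ¬ TailEquiv g (seqPow gv) ∧ ¬ TailEquiv g (seqPow gv⁻¹)

def Cond2 (g : ℕ → F2) : Prop :=
  ¬ TailEquiv g (seqPer gh gv⁻¹) ∧ ¬ TailEquiv g (seqPer gh⁻¹ gv)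

def adjSum {V : Type} (G : SimpleGraph V) (f : V → ℝ) (v : V) : ℝ :=
  ∑ᶠ w ∈ G.neighborSet v, f w

def BoundedValance {V : Type} (G : SimpleGraph V) : Prop :=
  ∃ D : ℕ, ∀ v, (G.neighborSet v).Finite ∧ (G.neighborSet v).ncard ≤ D

def BipartWith {V : Type} (G : SimpleGraph V) (A : Set V) : Prop :=
  ∀ v w, G.Adj v w → (v ∈ A ↔ w ∉ A)

def Hop {V : Type} (G : SimpleGraph V) (A : Set V) (k : ℤ) (f : V → ℝ) : V → ℝ :=
  fun v => f v + (k : ℝ) * Set.indicator A (adjSum G f) v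

def Vop {V : Type} (G : SimpleGraph V) (A : Set V) (k : ℤ) (f : V → ℝ) : V → ℝ :=
  fun v => f v + (k : ℝ) * Set.indicator Aᶜ (adjSum G f) v

def QuadV {V : Type} (A : Set V) (s : SP) : Set (V → ℝ) :=
  {f | (∀ v ∈ A, f v = 0 ∨ (if s.1 then 0 < f v else f v < 0)) ∧
       ∀ v, v ∉ A → f v = 0 ∨ (if s.2 then 0 < f v else f v < 0)}

def valance {V : Type} (G : SimpleGraph V) (v : V) : ℕ := (G.neighborSet v).ncard

def evec {V : Type} (v : V) : V → ℝ := Set.indicator {v} 1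

def InSpoke {V : Type} (G : SimpleGraph V) (x : V) : Prop :=
  ∃ k : ℕ, 2 ≤ k ∧ ∃ c : ℕ → V,
    (∀ i j, 1 ≤ i → i ≤ k → 1 ≤ j → j ≤ k → c i = c j → i = j) ∧
    valance G (c 1) = 1 ∧
    (∀ i, 2 ≤ i → i ≤ k - 1 →
      valance G (c i) = 2 ∧ G.Adj (c i) (c (i - 1)) ∧ G.Adj (c i) (c (i + 1))) ∧
    ∃ i, 1 ≤ i ∧ i ≤ k ∧ x = c i

/-!
On each side of the bipartition, the function `Υ^g e_x` is a polynomial in the adjacency operator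
`T` applied to `e_x`. Along a reduced word the pair of polynomials changes, up to signs, by
`(P, Q) ↦ (P + X Q, Q)` or `(P, Q) ↦ (X P ± Q, P)`, and these operations preserve the cone spanned
by the pairs `(S_{k+1}, S_k)` and `(S_k, 0)` of Chebyshev polynomials, `S_{k+2} = X S_{k+1} - S_k`.
So it suffices that `0 ≤ S_n(T_H) e_x ≤ S_n(T_G) e_x`.

Both inequalities come from one comparison principle: if `S_m(T) ≥ 0` for all `m < n`, then a
sequence with `w_1 ≤ T w_0` and `w_j + w_{j+2} ≤ T w_{j+1}` satisfies `w_n ≤ S_n(T) w_0`. For a walk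
`p` without backtracking it applies to `w_j = e_{p j}` and gives `0 ≤ S_n(T) e_{p 0}` by induction
on `n`; in an infinite connected graph of bounded valance such walks of any length start at every
vertex. In `G` it applies to the extension by zero of `w_j = S_j(T_H) e_x`, because `T_G` dominates
`T_H`.
-/

open Polynomial

section Walks

variable {V W : Type*} {G : SimpleGraph V} {H : SimpleGraph W}

/-- A walk of length `n` without backtracking, as the sequence `p 0, …, p n` of its vertices (the
values of `p` beyond `n` are irrelevant). -/
def IsNonbacktracking (G : SimpleGraph V) (n : ℕ) (p : ℕ → V) : Prop :=
  (∀ j < n, G.Adj (p j) (p (j + 1))) ∧ ∀ j, j + 1 < n → p (j + 2) ≠ p j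

/-- The vertex `v` is the start of non-backtracking walks of every length. In a connected locally
finite graph this fails only if the graph is a finite tree. -/
def HasLongWalks (G : SimpleGraph V) (v : V) : Prop :=
  ∀ n, ∃ p, p 0 = v ∧ IsNonbacktracking G n p

theorem HasLongWalks.of_adj {v w : V} (hv : HasLongWalks G v) (hvw : G.Adj v w) :
    HasLongWalks G w := by
  intro n
  obtain ⟨p, rfl, hadj, hne⟩ := hv (n + 1)
  by_cases hw : p 1 = w
  · exact ⟨fun j => p (j + 1), hw, fun j hj => hadj (j + 1) (by omega),
      fun j hj => hne (j + 1) (by omega)⟩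
  · refine ⟨fun j => j.casesOn w p, rfl, ?_, ?_⟩
    · rintro (_ | j) hj
      · exact hvw.symm
      · exact hadj j (by omega)
    · rintro (_ | j) hj
      · exact hw
      · exact hne j (by omega)

theorem IsNonbacktracking.hasLongWalks {n : ℕ} {p : ℕ → V} (hp : IsNonbacktracking G n p)
    (h0 : HasLongWalks G (p 0)) {j : ℕ} (hj : j ≤ n) : HasLongWalks G (p j) := by
  induction j with
  | zero => exact h0
  | succ j ih => exact (ih (by omega)).of_adj (hp.1 j hj)

theorem HasLongWalks.map (φ : H →g G) (hφ : Function.Injective φ) {x : W}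
    (hx : HasLongWalks H x) : HasLongWalks G (φ x) := by
  intro n
  obtain ⟨p, rfl, hadj, hne⟩ := hx n
  exact ⟨φ ∘ p, rfl, fun j hj => φ.map_adj (hadj j hj), fun j hj h => hne j hj (hφ h)⟩

theorem finite_setOf_walk_length_le [G.LocallyFinite] (n : ℕ) (x : V) :
    {y | ∃ p : G.Walk x y, p.length ≤ n}.Finite := by
  induction n generalizing x with
  | zero =>
    refine (Set.finite_singleton x).subset ?_
    rintro y ⟨p, hp⟩
    exact (SimpleGraph.Walk.eq_of_length_eq_zero (Nat.le_zero.mp hp)).symm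
  | succ n ih =>
    refine ((Set.finite_singleton x).union
      ((G.neighborSet x).toFinite.biUnion fun z _ => ih z)).subset ?_
    rintro y ⟨_ | ⟨hxz, q⟩, hp⟩
    · exact Or.inl rfl
    · exact Or.inr (Set.mem_biUnion hxz ⟨q, Nat.le_of_succ_le_succ hp⟩)

theorem hasLongWalks_of_preconnected [Infinite V] [G.LocallyFinite] (hG : G.Preconnected) (x : V) :
    HasLongWalks G x := by
  intro n
  obtain ⟨y, hy⟩ := (finite_setOf_walk_length_le (G := G) n x).exists_notMem
  obtain ⟨p, hp⟩ := (hG x y).exists_isPath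
  have hlen : n < p.length := not_le.mp fun h => hy ⟨p, h⟩
  refine ⟨p.getVert, p.getVert_zero, fun j hj => p.adj_getVert_succ (by omega), fun j hj h => ?_⟩
  have := hp.getVert_injOn (Set.mem_ofPred.mpr (by omega)) (Set.mem_ofPred.mpr (by omega)) h
  omega

end Walks

section ChebyshevComparison

variable {E M : Type*} [Ring E] [AddCommGroup M] [Module E M]

theorem aeval_S_add_one_smul (T : E) (k : ℤ) (m : M) :
    aeval T (Chebyshev.S ℤ (k + 1)) • m =
      aeval T (Chebyshev.S ℤ k) • T • m - aeval T (Chebyshev.S ℤ (k - 1)) • m := by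
  rw [Chebyshev.S_add_one, mul_comm, map_sub, map_mul, aeval_X, sub_smul, mul_smul]

variable [PartialOrder M] [IsOrderedAddMonoid M]

theorem le_aeval_S_smul_sub {T : E} {K : Set M} {n : ℕ}
    (hpos : ∀ m < n, ∀ f ∈ K, 0 ≤ aeval T (Chebyshev.S ℤ m) • f) (k : ℕ) (hk : k ≤ n)
    (w : ℕ → M) (hw : ∀ j < k, T • w (j + 1) - w j - w (j + 2) ∈ K) :
    w (k + 1) ≤
      aeval T (Chebyshev.S ℤ k) • w 1 - aeval T (Chebyshev.S ℤ ((k : ℤ) - 1)) • w 0 := by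
  induction k generalizing w with
  | zero => simp
  | succ k ih =>
    have hstep := hpos k (by omega) _ (hw 0 (by omega))
    rw [smul_sub, smul_sub] at hstep
    calc w (k + 2)
        ≤ aeval T (Chebyshev.S ℤ k) • w 2 - aeval T (Chebyshev.S ℤ ((k : ℤ) - 1)) • w 1 :=
          ih (by omega) (fun j => w (j + 1)) fun j hj => hw (j + 1) (by omega)
      _ ≤ aeval T (Chebyshev.S ℤ k) • T • w 1 - aeval T (Chebyshev.S ℤ k) • w 0 -
            aeval T (Chebyshev.S ℤ ((k : ℤ) - 1)) • w 1 :=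
          sub_le_sub_right (sub_nonneg.mp hstep) _
      _ = _ := by
          push_cast
          rw [aeval_S_add_one_smul, add_sub_cancel_right]
          abel

theorem le_aeval_S_smul {T : E} {K : Set M} {n : ℕ}
    (hpos : ∀ m < n, ∀ f ∈ K, 0 ≤ aeval T (Chebyshev.S ℤ m) • f) (w : ℕ → M)
    (hw₀ : 0 < n → T • w 0 - w 1 ∈ K)
    (hw : ∀ j, j + 1 < n → T • w (j + 1) - w j - w (j + 2) ∈ K) :
    w n ≤ aeval T (Chebyshev.S ℤ n) • w 0 := by
  have h := le_aeval_S_smul_sub hpos n le_rfl (fun j => j.casesOn 0 w) (by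
    rintro (_ | j) hj
    · simpa using hw₀ hj
    · exact hw j hj)
  simpa using h

end ChebyshevComparison

section Adjacency

variable {V W : Type} {G : SimpleGraph V} {H : SimpleGraph W}

/-- The adjacency operator of a locally finite graph, as an operator on the space `ℝ^V` with its
product topology. -/
def adjOp (G : SimpleGraph V) [G.LocallyFinite] : (V → ℝ) →L[ℝ] (V → ℝ) :=
  ContinuousLinearMap.pi fun v => ∑ w ∈ G.neighborFinset v, ContinuousLinearMap.proj w

theorem adjOp_apply [G.LocallyFinite] (f : V → ℝ) (v : V) :
    adjOp G f v = ∑ w ∈ G.neighborFinset v, f w := by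
  simp [adjOp]

theorem adjSum_eq_adjOp [G.LocallyFinite] (f : V → ℝ) : adjSum G f = adjOp G f := by
  funext v
  rw [adjOp_apply, adjSum, SimpleGraph.neighborFinset, finsum_mem_eq_toFinset_sum]

theorem adjOp_nonneg [G.LocallyFinite] {f : V → ℝ} (hf : 0 ≤ f) : 0 ≤ adjOp G f := fun v => by
  rw [adjOp_apply]
  exact Finset.sum_nonneg fun w _ => hf w

open Classical in
theorem evec_eq_single (v : V) : evec v = Pi.single v 1 := by
  ext w
  simp [evec, Set.indicator_apply, Pi.single_apply]

open Classical in
theorem adjOp_evec [G.LocallyFinite] (v w : V) :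
    adjOp G (evec v) w = if G.Adj w v then 1 else 0 := by
  simp [adjOp_apply, evec_eq_single, Pi.single_apply]

theorem evec_nonneg (v : V) : 0 ≤ evec v :=
  Set.indicator_nonneg fun _ _ => zero_le_one

theorem hasSum_smul_evec (f : V → ℝ) : HasSum (fun v => f v • evec v) f := by
  classical
  refine Pi.hasSum.mpr fun w => ?_
  convert hasSum_single (f := fun v => (f v • evec v) w) w fun v hv => ?_ using 1
  · simp [evec_eq_single]
  · simp [evec_eq_single, hv.symm]

/-- The functions on which the operators `S_n` of the adjacency operator are shown to be
nonnegative: those that are nonnegative and vanish at the vertices without long walks. -/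
def longWalkCone (G : SimpleGraph V) : Set (V → ℝ) :=
  {f | 0 ≤ f ∧ ∀ v, f v ≠ 0 → HasLongWalks G v}

theorem evec_mem_longWalkCone {v : V} (hv : HasLongWalks G v) : evec v ∈ longWalkCone G := by
  refine ⟨evec_nonneg v, fun w hw => ?_⟩
  rwa [Set.mem_singleton_iff.mp (Set.mem_of_indicator_ne_zero hw)]

theorem mem_longWalkCone_of_le_adjOp [G.LocallyFinite] {f g : V → ℝ} (hf : f ∈ longWalkCone G)
    (hg : 0 ≤ g) (hgf : g ≤ adjOp G f) : g ∈ longWalkCone G := by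
  refine ⟨hg, fun v hv => ?_⟩
  have hsum : ∑ w ∈ G.neighborFinset v, f w ≠ 0 := by
    rw [← adjOp_apply]
    exact (((hg v).lt_of_ne' hv).trans_le (hgf v)).ne'
  obtain ⟨w, hw, hfw⟩ := Finset.exists_ne_zero_of_sum_ne_zero hsum
  exact (hf.2 w hfw).of_adj ((G.mem_neighborFinset v w).mp hw).symm

theorem aeval_adjOp_nonneg_of_evec [G.LocallyFinite] {p : ℤ[X]}
    (hp : ∀ v, HasLongWalks G v → 0 ≤ aeval (adjOp G) p (evec v)) {f : V → ℝ}
    (hf : f ∈ longWalkCone G) : 0 ≤ aeval (adjOp G) p f := by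
  refine ((hasSum_smul_evec f).mapL (aeval (adjOp G) p)).nonneg fun v => ?_
  rw [map_smul]
  by_cases hv : f v = 0
  · rw [hv, zero_smul]
  · exact smul_nonneg (hf.1 v) (hp v (hf.2 v hv))

theorem evec_le_adjOp_evec [G.LocallyFinite] {v w : V} (h : G.Adj v w) :
    evec w ≤ adjOp G (evec v) := by
  classical
  intro z
  rw [adjOp_evec, evec_eq_single, Pi.single_apply]
  have := h.symm
  split_ifs <;> simp_all

theorem evec_add_evec_le_adjOp_evec [G.LocallyFinite] {u v w : V} (hu : G.Adj v u)
    (hw : G.Adj v w) (huw : w ≠ u) : evec u + evec w ≤ adjOp G (evec v) := by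
  classical
  intro z
  rw [Pi.add_apply, adjOp_evec, evec_eq_single, evec_eq_single, Pi.single_apply, Pi.single_apply]
  have := hu.symm
  have := hw.symm
  split_ifs <;> simp_all

theorem le_aeval_S_adjOp [G.LocallyFinite] {n : ℕ}
    (hpos : ∀ m < n, ∀ f ∈ longWalkCone G, 0 ≤ aeval (adjOp G) (Chebyshev.S ℤ m) f)
    {w : ℕ → V → ℝ} (hw : ∀ j ≤ n, w j ∈ longWalkCone G)
    (hw₀ : 0 < n → w 1 ≤ adjOp G (w 0))
    (hw₂ : ∀ j, j + 1 < n → w j + w (j + 2) ≤ adjOp G (w (j + 1))) :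
    w n ≤ aeval (adjOp G) (Chebyshev.S ℤ n) (w 0) := by
  refine le_aeval_S_smul (T := adjOp G) hpos w (fun hn => ?_) fun j hj => ?_
  · exact mem_longWalkCone_of_le_adjOp (hw 0 hn.le) (sub_nonneg.mpr (hw₀ hn))
      (sub_le_self _ (hw 1 hn).1)
  · rw [sub_sub]
    exact mem_longWalkCone_of_le_adjOp (hw (j + 1) hj.le) (sub_nonneg.mpr (hw₂ j hj))
      (sub_le_self _ (add_nonneg (hw j (by omega)).1 (hw (j + 2) hj).1))

theorem aeval_S_adjOp_nonneg [G.LocallyFinite] (n : ℕ) :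
    ∀ f ∈ longWalkCone G, 0 ≤ aeval (adjOp G) (Chebyshev.S ℤ n) f := by
  induction n using Nat.strong_induction_on with
  | _ n ih =>
    refine fun f hf => aeval_adjOp_nonneg_of_evec (fun v hv => ?_) hf
    obtain ⟨p, rfl, hp⟩ := hv n
    calc 0 ≤ evec (p n) := evec_nonneg (p n)
      _ ≤ aeval (adjOp G) (Chebyshev.S ℤ n) (evec (p 0)) :=
        le_aeval_S_adjOp (w := fun j => evec (p j)) ih
          (fun j hj => evec_mem_longWalkCone (hp.hasLongWalks hv hj))
          (fun hn => evec_le_adjOp_evec (hp.1 0 hn))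
          fun j hj => evec_add_evec_le_adjOp_evec (hp.1 j (by omega)).symm (hp.1 (j + 1) hj)
            (hp.2 j hj)

theorem extend_evec {φ : W → V} (hφ : Function.Injective φ) (x : W) :
    Function.extend φ (evec x) 0 = evec (φ x) := by
  classical
  funext v
  by_cases hv : ∃ y, φ y = v
  · obtain ⟨y, rfl⟩ := hv
    simp [hφ.extend_apply, evec_eq_single, Pi.single_apply, hφ.eq_iff]
  · rw [Function.extend_apply' _ _ _ hv, evec_eq_single, Pi.zero_apply,
      Pi.single_eq_of_ne fun h => hv ⟨x, h.symm⟩]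

theorem extend_mem_longWalkCone (φ : H →g G) (hφ : Function.Injective φ)
    (hH : ∀ x, HasLongWalks H x) {f : W → ℝ} (hf : 0 ≤ f) :
    Function.extend φ f 0 ∈ longWalkCone G := by
  refine ⟨Function.extend_nonneg hf le_rfl, fun v hv => ?_⟩
  obtain ⟨x, -, rfl⟩ := Function.support_extend_zero_subset hv
  exact (hH x).map φ hφ

theorem extend_adjOp_le [G.LocallyFinite] [H.LocallyFinite] (φ : H →g G)
    (hφ : Function.Injective φ) {f : W → ℝ} (hf : 0 ≤ f) :
    Function.extend φ (adjOp H f) 0 ≤ adjOp G (Function.extend φ f 0) := by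
  classical
  intro v
  by_cases hv : ∃ y, φ y = v
  · obtain ⟨y, rfl⟩ := hv
    have himage : (H.neighborFinset y).image φ ⊆ G.neighborFinset (φ y) := by
      intro v hv
      obtain ⟨z, hz, rfl⟩ := Finset.mem_image.mp hv
      exact (G.mem_neighborFinset _ _).mpr (φ.map_adj ((H.mem_neighborFinset _ _).mp hz))
    calc Function.extend φ (adjOp H f) 0 (φ y)
        = ∑ z ∈ H.neighborFinset y, f z := by rw [hφ.extend_apply, adjOp_apply]
      _ = ∑ v ∈ (H.neighborFinset y).image φ, Function.extend φ f 0 v := by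
          simp only [Finset.sum_image hφ.injOn, hφ.extend_apply]
      _ ≤ ∑ v ∈ G.neighborFinset (φ y), Function.extend φ f 0 v :=
          Finset.sum_le_sum_of_subset_of_nonneg himage fun v _ _ =>
            Function.extend_nonneg hf le_rfl v
      _ = adjOp G (Function.extend φ f 0) (φ y) := (adjOp_apply _ _).symm
  · rw [Function.extend_apply' _ _ _ hv]
    exact adjOp_nonneg (Function.extend_nonneg hf le_rfl) v

theorem aeval_S_adjOp_evec_nonneg [H.LocallyFinite] (hH : ∀ x, HasLongWalks H x) (n : ℕ) (x : W) :
    0 ≤ aeval (adjOp H) (Chebyshev.S ℤ n) (evec x) :=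
  aeval_S_adjOp_nonneg n _ (evec_mem_longWalkCone (hH x))

theorem extend_aeval_S_adjOp_evec_le [G.LocallyFinite] [H.LocallyFinite] (φ : H →g G)
    (hφ : Function.Injective φ) (hH : ∀ x, HasLongWalks H x) (n : ℕ) (x : W) :
    Function.extend φ (aeval (adjOp H) (Chebyshev.S ℤ n) (evec x)) 0 ≤
      aeval (adjOp G) (Chebyshev.S ℤ n) (evec (φ x)) := by
  let w (j : ℕ) : V → ℝ := Function.extend φ (aeval (adjOp H) (Chebyshev.S ℤ j) (evec x)) 0
  have hS (j : ℕ) := aeval_S_adjOp_evec_nonneg hH j x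
  have hw (j : ℕ) : w j ∈ longWalkCone G := extend_mem_longWalkCone φ hφ hH (hS j)
  have hw₀ : w 0 = evec (φ x) := by simp [w, extend_evec hφ]
  have hw₁ : w 1 ≤ adjOp G (w 0) := by
    simpa [w] using extend_adjOp_le φ hφ (hS 0)
  have hw₂ (j : ℕ) : w j + w (j + 2) ≤ adjOp G (w (j + 1)) := by
    have hrec : aeval (adjOp H) (Chebyshev.S ℤ (j : ℤ)) (evec x) +
        aeval (adjOp H) (Chebyshev.S ℤ (j + 2 : ℕ)) (evec x) =
          adjOp H (aeval (adjOp H) (Chebyshev.S ℤ (j + 1 : ℕ)) (evec x)) := by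
      simp [Chebyshev.S_add_two]
    have hadd : w j + w (j + 2) = Function.extend φ (_ + _) 0 :=
      (map_add (Function.ExtendByZero.hom ℝ φ) _ _).symm
    rw [hadd, hrec]
    exact extend_adjOp_le φ hφ (hS (j + 1))
  rw [← hw₀]
  exact le_aeval_S_adjOp (fun m _ => aeval_S_adjOp_nonneg m) (fun j _ => hw j) (fun _ => hw₁)
    fun j _ => hw₂ j

end Adjacency

section ChebyshevCone

theorem X_mul_S_add_one {R : Type*} [CommRing R] (k : ℤ) :
    X * Chebyshev.S R (k + 1) = Chebyshev.S R (k + 2) + Chebyshev.S R k := by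
  rw [Chebyshev.S_add_two, sub_add_cancel]

/-- The polynomials that are sums of Chebyshev polynomials `S_k`. -/
def chebyshevCone : AddSubmonoid ℤ[X] :=
  AddSubmonoid.closure (Set.range fun k : ℕ => Chebyshev.S ℤ k)

theorem S_mem_chebyshevCone (k : ℕ) : Chebyshev.S ℤ k ∈ chebyshevCone :=
  AddSubmonoid.subset_closure ⟨k, rfl⟩

/-- The pairs of polynomials that are sums of pairs `(S_{k+1}, S_k)` and `(S_k, 0)`. Unlike
`chebyshevCone × chebyshevCone`, this cone is stable under `(P, Q) ↦ (X P - Q, P)`. -/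
def chebyshevPairCone : AddSubmonoid (ℤ[X] × ℤ[X]) :=
  AddSubmonoid.closure
    (Set.range (fun k : ℕ => (Chebyshev.S ℤ (k + 1), Chebyshev.S ℤ k)) ∪
      Set.range fun k : ℕ => (Chebyshev.S ℤ k, 0))

namespace chebyshevPairCone

theorem S_succ_S_mem (k : ℕ) :
    (Chebyshev.S ℤ (k + 1), Chebyshev.S ℤ k) ∈ chebyshevPairCone :=
  AddSubmonoid.subset_closure (Or.inl ⟨k, rfl⟩)

theorem S_zero_mem (k : ℕ) : (Chebyshev.S ℤ k, 0) ∈ chebyshevPairCone :=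
  AddSubmonoid.subset_closure (Or.inr ⟨k, rfl⟩)

theorem induction {motive : (P Q : ℤ[X]) → (P, Q) ∈ chebyshevPairCone → Prop}
    (succ : ∀ k : ℕ, motive _ _ (S_succ_S_mem k))
    (zero_right : ∀ k : ℕ, motive _ _ (S_zero_mem k)) (zero : motive 0 0 (zero_mem _))
    (add : ∀ P Q P' Q' (h : (P, Q) ∈ chebyshevPairCone) (h' : (P', Q') ∈ chebyshevPairCone),
      motive P Q h → motive P' Q' h' → motive (P + P') (Q + Q') (add_mem h h'))
    {P Q : ℤ[X]} (h : (P, Q) ∈ chebyshevPairCone) : motive P Q h := by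
  refine AddSubmonoid.closure_induction
    (motive := fun (R : ℤ[X] × ℤ[X]) (hR : R ∈ chebyshevPairCone) => motive R.1 R.2 hR) ?_ zero
    (fun R R' => add R.1 R.2 R'.1 R'.2) h
  rintro _ (⟨k, rfl⟩ | ⟨k, rfl⟩)
  · exact succ k
  · exact zero_right k

theorem mem_chebyshevCone {P Q : ℤ[X]} (h : (P, Q) ∈ chebyshevPairCone) :
    P ∈ chebyshevCone ∧ Q ∈ chebyshevCone := by
  induction h using chebyshevPairCone.induction with
  | succ k => exact ⟨S_mem_chebyshevCone (k + 1), S_mem_chebyshevCone k⟩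
  | zero_right k => exact ⟨S_mem_chebyshevCone k, zero_mem _⟩
  | zero => exact ⟨zero_mem _, zero_mem _⟩
  | add _ _ _ _ _ _ h h' => exact ⟨add_mem h.1 h'.1, add_mem h.2 h'.2⟩

theorem X_mul_S_zero_mem (k : ℕ) : (X * Chebyshev.S ℤ k, 0) ∈ chebyshevPairCone := by
  cases k with
  | zero => simpa using S_zero_mem 1
  | succ k =>
    push_cast
    rw [X_mul_S_add_one]
    simpa using add_mem (S_zero_mem (k + 2)) (S_zero_mem k)

theorem snd_zero_mem {P Q : ℤ[X]} (h : (P, Q) ∈ chebyshevPairCone) :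
    (Q, 0) ∈ chebyshevPairCone := by
  induction h using chebyshevPairCone.induction with
  | succ k => exact S_zero_mem k
  | zero_right _ => exact zero_mem _
  | zero => exact zero_mem _
  | add _ _ _ _ _ _ h h' => simpa using add_mem h h'

theorem add_X_mul_mem {P Q : ℤ[X]} (h : (P, Q) ∈ chebyshevPairCone) :
    (P + X * Q, Q) ∈ chebyshevPairCone := by
  induction h using chebyshevPairCone.induction with
  | succ k => simpa using add_mem (S_succ_S_mem k) (X_mul_S_zero_mem k)
  | zero_right k => simpa using S_zero_mem k
  | zero =>
    rw [mul_zero, add_zero]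
    exact zero_mem _
  | add _ _ _ _ _ _ h h' => simpa [mul_add, add_add_add_comm] using add_mem h h'

theorem X_mul_sub_mem {P Q : ℤ[X]} (h : (P, Q) ∈ chebyshevPairCone) :
    (X * P - Q, P) ∈ chebyshevPairCone := by
  induction h using chebyshevPairCone.induction with
  | succ k =>
    rw [← Chebyshev.S_add_two]
    exact S_succ_S_mem (k + 1)
  | zero_right k =>
    cases k with
    | zero => simpa using S_succ_S_mem 0
    | succ k =>
      push_cast
      rw [sub_zero, X_mul_S_add_one]
      simpa [add_assoc, one_add_one_eq_two] using add_mem (S_succ_S_mem (k + 1)) (S_zero_mem k)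
  | zero =>
    rw [mul_zero, sub_zero]
    exact zero_mem _
  | add _ _ _ _ _ _ h h' => simpa [mul_add, add_sub_add_comm] using add_mem h h'

theorem X_mul_add_units_smul_mem {P Q : ℤ[X]} (h : (P, Q) ∈ chebyshevPairCone) (s : ℤˣ) :
    (X * P + s • Q, P) ∈ chebyshevPairCone := by
  have hsub := X_mul_sub_mem h
  rcases Int.units_eq_one_or s with rfl | rfl
  · have hQ := snd_zero_mem h
    simpa using add_mem hsub (add_mem hQ hQ)
  · simpa [sub_eq_add_neg] using hsub

end chebyshevPairCone

end ChebyshevCone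

section ShearPolynomials

/-- The exponent `±1` that the second component of a letter of `FreeGroup Bool` stands for. -/
def letterSign (ε : Bool) : ℤˣ := cond ε 1 (-1)

/-- Let `x` be a vertex on the side `c` of a bipartite graph with adjacency operator `T`. The
function obtained from `e_x` by the action of the word `L` is `shearPoly c L b (T) e_x` on the side
`b`. The sides `𝒜` and `ℬ` are encoded by `true` and `false`. -/
def shearPoly (c : Bool) : List (Bool × Bool) → Bool → ℤ[X]
  | [] => Pi.single c 1
  | (b, ε) :: L =>
    Function.update (shearPoly c L) b
      (shearPoly c L b + letterSign ε • (X * shearPoly c L (!b)))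

theorem shearPoly_cons_self (c b ε : Bool) (L : List (Bool × Bool)) :
    shearPoly c ((b, ε) :: L) b =
      shearPoly c L b + letterSign ε • (X * shearPoly c L (!b)) :=
  Function.update_self ..

theorem shearPoly_cons_not (c b ε : Bool) (L : List (Bool × Bool)) :
    shearPoly c ((b, ε) :: L) (!b) = shearPoly c L (!b) :=
  Function.update_of_ne (Bool.not_ne_self b) ..

theorem exists_units_smul_shearPoly_cons_mem_chebyshevPairCone (c : Bool) (L : List (Bool × Bool))
    (b ε : Bool) (hL : FreeGroup.IsReduced ((b, ε) :: L)) :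
    ∃ s : ℤˣ, ((letterSign ε * s) • shearPoly c ((b, ε) :: L) b,
      s • shearPoly c ((b, ε) :: L) (!b)) ∈ chebyshevPairCone := by
  induction L generalizing b ε with
  | nil =>
    rw [shearPoly_cons_self, shearPoly_cons_not]
    by_cases hb : b = c
    · refine ⟨letterSign ε, ?_⟩
      subst hb
      simpa [shearPoly] using chebyshevPairCone.S_zero_mem 0
    · refine ⟨1, ?_⟩
      obtain rfl : c = !b := by simpa [Bool.eq_not] using Ne.symm hb
      simpa [shearPoly, smul_smul] using chebyshevPairCone.S_succ_S_mem 0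
  | cons l L ih =>
    obtain ⟨b', ε'⟩ := l
    obtain ⟨hll, hL'⟩ := FreeGroup.isReduced_cons_cons.mp hL
    obtain ⟨s, hs⟩ := ih b' ε' hL'
    rw [shearPoly_cons_self, shearPoly_cons_not]
    by_cases hb : b = b'
    · obtain rfl : ε = ε' := hll hb
      subst hb
      refine ⟨s, ?_⟩
      have hεs : letterSign ε * s * letterSign ε = s := by
        rw [mul_right_comm, Int.units_mul_self, one_mul]
      simpa only [smul_add, smul_smul, mul_smul_comm, hεs] using chebyshevPairCone.add_X_mul_mem hs
    · obtain rfl : b' = !b := by simpa [Bool.eq_not] using Ne.symm hb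
      refine ⟨letterSign ε' * s, ?_⟩
      have hεs : letterSign ε * (letterSign ε' * s) * letterSign ε = letterSign ε' * s := by
        rw [mul_right_comm, Int.units_mul_self, one_mul]
      simpa only [smul_add, smul_smul, mul_smul_comm, hεs, add_comm, mul_assoc, Bool.not_not] using
        chebyshevPairCone.X_mul_add_units_smul_mem hs (letterSign ε * letterSign ε')

theorem exists_units_smul_shearPoly_mem_chebyshevCone (c : Bool) {L : List (Bool × Bool)}
    (hL : FreeGroup.IsReduced L) (b : Bool) :
    ∃ s : ℤˣ, s • shearPoly c L b ∈ chebyshevCone := by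
  match L with
  | [] =>
    refine ⟨1, ?_⟩
    by_cases hb : b = c
    · simpa [shearPoly, hb] using S_mem_chebyshevCone 0
    · simp [shearPoly, hb, zero_mem]
  | (b', ε) :: L =>
    obtain ⟨s, hs⟩ := exists_units_smul_shearPoly_cons_mem_chebyshevPairCone c L b' ε hL
    obtain ⟨hself, hnot⟩ := chebyshevPairCone.mem_chebyshevCone hs
    by_cases hb : b = b'
    · subst hb
      exact ⟨_, hself⟩
    · exact ⟨s, Bool.eq_not.mpr hb ▸ hnot⟩

end ShearPolynomials

section ShearAction

variable {V W : Type} {G : SimpleGraph V} {H : SimpleGraph W} {A : Set V}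

open Classical in
/-- The side of the bipartition `V = A ⊔ Aᶜ` on which `v` lies, as the generator of `F2` that shears
along this side: `true` on `A` and `false` on `Aᶜ`. -/
def side (A : Set V) (v : V) : Bool := decide (v ∈ A)

/-- `U` is the action `Υ` of `F2` on `ℝ^V` associated to the graph `G` with bipartition
`V = A ⊔ Aᶜ`. -/
def IsShearAction (G : SimpleGraph V) (A : Set V) (U : F2 →* Equiv.Perm (V → ℝ)) : Prop :=
  (∀ (k : ℤ) (f : V → ℝ), U (gh ^ k) f = Hop G A k f) ∧
    ∀ (k : ℤ) (f : V → ℝ), U (gv ^ k) f = Vop G A k f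

theorem BipartWith.side_eq_not (hA : BipartWith G A) {v w : V} (h : G.Adj v w) :
    side A w = !side A v := by
  by_cases hw : w ∈ A <;> simp [side, hw, hA v w h]

theorem mk_singleton_eq_of_zpow {α : Type*} (a : α) (ε : Bool) :
    FreeGroup.mk [(a, ε)] = FreeGroup.of a ^ (letterSign ε : ℤ) := by
  cases ε
  · simp [letterSign, FreeGroup.of, FreeGroup.inv_mk, FreeGroup.invRev]
  · simp [letterSign, FreeGroup.of]

namespace IsShearAction

variable [G.LocallyFinite] {U : F2 →* Equiv.Perm (V → ℝ)}

theorem apply_mk_singleton (hU : IsShearAction G A U) (b ε : Bool) (f : V → ℝ) (v : V) :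
    U (FreeGroup.mk [(b, ε)]) f v =
      f v + letterSign ε • (if side A v = b then adjOp G f v else 0) := by
  rw [mk_singleton_eq_of_zpow]
  cases b
  · rw [← gv, hU.2, Vop, adjSum_eq_adjOp]
    by_cases hv : v ∈ A <;> simp [side, hv, Units.smul_def]
  · rw [← gh, hU.1, Hop, adjSum_eq_adjOp]
    by_cases hv : v ∈ A <;> simp [side, hv, Units.smul_def]

theorem apply_mk_evec (hU : IsShearAction G A U) (hA : BipartWith G A) (L : List (Bool × Bool))
    (x v : V) :
    U (FreeGroup.mk L) (evec x) v =
      aeval (adjOp G) (shearPoly (side A x) L (side A v)) (evec x) v := by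
  classical
  induction L generalizing v with
  | nil =>
    rw [← FreeGroup.one_eq_mk, map_one, Equiv.Perm.one_apply]
    by_cases hv : v = x
    · simp [shearPoly, hv]
    · rw [evec_eq_single, Pi.single_eq_of_ne hv]
      by_cases hs : side A v = side A x <;> simp [shearPoly, hs, hv]
  | cons l L ih =>
    obtain ⟨b, ε⟩ := l
    have hcons : FreeGroup.mk ((b, ε) :: L) = FreeGroup.mk [(b, ε)] * FreeGroup.mk L := by
      simp
    rw [hcons, map_mul, Equiv.Perm.mul_apply, hU.apply_mk_singleton, ih]
    by_cases hb : side A v = b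
    · have hadj : adjOp G (U (FreeGroup.mk L) (evec x)) v =
          adjOp G (aeval (adjOp G) (shearPoly (side A x) L (!b)) (evec x)) v := by
        rw [adjOp_apply, adjOp_apply]
        refine Finset.sum_congr rfl fun w hw => ?_
        rw [ih, hA.side_eq_not ((G.mem_neighborFinset v w).mp hw), hb]
      rw [if_pos hb, hb, shearPoly_cons_self, hadj]
      simp [Units.smul_def]
    · rw [if_neg hb, smul_zero, add_zero, Bool.eq_not.mpr hb, shearPoly_cons_not]

end IsShearAction

theorem aeval_adjOp_evec_nonneg_and_le [G.LocallyFinite] [H.LocallyFinite] (φ : H →g G)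
    (hφ : Function.Injective φ) (hH : ∀ x, HasLongWalks H x) (x y : W) {p : ℤ[X]}
    (hp : p ∈ chebyshevCone) :
    0 ≤ aeval (adjOp H) p (evec x) y ∧
      aeval (adjOp H) p (evec x) y ≤ aeval (adjOp G) p (evec (φ x)) (φ y) := by
  induction hp using AddSubmonoid.closure_induction with
  | mem p hp =>
    obtain ⟨n, rfl⟩ := hp
    refine ⟨aeval_S_adjOp_evec_nonneg hH n x y, ?_⟩
    simpa only [hφ.extend_apply] using extend_aeval_S_adjOp_evec_le φ hφ hH n x (φ y)
  | zero => simp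
  | add p q _ _ hp hq =>
    simp only [map_add, add_apply, Pi.add_apply]
    exact ⟨add_nonneg hp.1 hq.1, add_le_add hp.2 hq.2⟩

theorem abs_aeval_adjOp_evec_le [G.LocallyFinite] [H.LocallyFinite] (φ : H →g G)
    (hφ : Function.Injective φ) (hH : ∀ x, HasLongWalks H x) (x y : W) {p : ℤ[X]} {s : ℤˣ}
    (hp : s • p ∈ chebyshevCone) :
    |aeval (adjOp H) p (evec x) y| ≤ |aeval (adjOp G) p (evec (φ x)) (φ y)| := by
  obtain ⟨hnonneg, hle⟩ := aeval_adjOp_evec_nonneg_and_le φ hφ hH x y hp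
  have habs := abs_le_abs_of_nonneg hnonneg hle
  rcases Int.units_eq_one_or s with rfl | rfl <;> simpa [Units.smul_def] using habs

theorem finite_neighborSet_of_hom [G.LocallyFinite] (φ : H →g G) (hφ : Function.Injective φ)
    (x : W) : (H.neighborSet x).Finite := by
  refine ((G.neighborSet (φ x)).toFinite.subset ?_).of_finite_image hφ.injOn
  rintro _ ⟨y, hy, rfl⟩
  exact φ.map_adj hy

theorem stmt18_general [G.LocallyFinite] (hA : BipartWith G A) (φ : H →g G)
    (hφ : Function.Injective φ) (hH : ∀ x, HasLongWalks H x)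
    {UG : F2 →* Equiv.Perm (V → ℝ)} (hUG : IsShearAction G A UG)
    {UH : F2 →* Equiv.Perm (W → ℝ)} (hUH : IsShearAction H (φ ⁻¹' A) UH) (g : F2) (x y : W) :
    |UH g (evec x) y| ≤ |UG g (evec (φ x)) (φ y)| := by
  let _ : H.LocallyFinite := fun x => (finite_neighborSet_of_hom φ hφ x).fintype
  have hA' : BipartWith H (φ ⁻¹' A) := fun v w h => hA (φ v) (φ w) (φ.map_adj h)
  obtain ⟨s, hs⟩ := exists_units_smul_shearPoly_mem_chebyshevCone (side A (φ x))
    (FreeGroup.isReduced_toWord (x := g)) (side A (φ y))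
  rw [← g.mk_toWord, hUG.apply_mk_evec hA, hUH.apply_mk_evec hA']
  exact abs_aeval_adjOp_evec_le φ hφ hH x y hs

end ShearAction

theorem stmt18 {V VH : Type} [Countable V] [Infinite V] [Infinite VH]
    (G : SimpleGraph V) (A : Set V)
    (hGconn : G.Connected) (hGval : BoundedValance G) (hGbip : BipartWith G A)
    (H : SimpleGraph VH) (emb : VH → V) (hemb : Function.Injective emb)
    (hsub : ∀ x y : VH, H.Adj x y → G.Adj (emb x) (emb y))
    (hHconn : H.Connected)
    (UG : F2 →* Equiv.Perm (V → ℝ))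
    (hUGh : ∀ k : ℤ, ∀ f : V → ℝ, UG (gh ^ k) f = Hop G A k f)
    (hUGv : ∀ k : ℤ, ∀ f : V → ℝ, UG (gv ^ k) f = Vop G A k f)
    (UH : F2 →* Equiv.Perm (VH → ℝ))
    (hUHh : ∀ k : ℤ, ∀ f : VH → ℝ, UH (gh ^ k) f = Hop H (emb ⁻¹' A) k f)
    (hUHv : ∀ k : ℤ, ∀ f : VH → ℝ, UH (gv ^ k) f = Vop H (emb ⁻¹' A) k f)
    (g : ℕ → F2) (hg : IsGeodesicRay g) :
    ∀ (x y : VH) (i : ℕ),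
      |UH (g i) (evec x) y| ≤ |UG (g i) (evec (emb x)) (emb y)| := by
  obtain ⟨_, hD⟩ := hGval
  let _ : G.LocallyFinite := fun v => (hD v).1.fintype
  let φ : H →g G := ⟨emb, hsub _ _⟩
  let _ : H.LocallyFinite := fun x => (finite_neighborSet_of_hom φ hemb x).fintype
  exact fun x y i => stmt18_general hGbip φ hemb (hasLongWalks_of_preconnected hHconn.preconnected)
    ⟨hUGh, hUGv⟩ ⟨hUHh, hUHv⟩ (g i) x y
end
end

section
/- Let 𝒢 be an infinite connected bipartite graph of bounded valance with bipartition 𝒱 = 𝒜 ⊔ ℬ and with no vertices of valance one. Let λ ≥ 2 and let θ ∈ S¹ be λ-renormalizable, with λ-shrinking sequence ⟨g_n⟩ and sign sequence ⟨s_n⟩. Then for every θ-survivor f ∈ ℝ^𝒱 and every vertex v ∈ 𝒱, the sequence n ↦ |Υ^{g_n}(f)(v)| is (non-strictly) monotone decreasing and tends to 0 as n → ∞. -/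
noncomputable section

/-!
Write `Pₙ = ρ_λ(gₙ)θ` and call the coordinate changed by the `n`-th letter active. If at some step
the letter pushed the active coordinate away from zero, or the active coordinate were not the larger
one in absolute value, then one of the two would hold again at the next step of the reduced word,
and no coordinate would ever shrink again. So in a shrinking sequence every letter pushes the active
coordinate towards zero, and the signs of `fₙ = Υ^{gₙ} f` give a recursion for `uₙ = |fₙ|`: on the
active side of the bipartition `uₙ₊₁ = uₙ - S uₙ` if the active coordinate of `Pₙ` keeps its sign
and `uₙ₊₁ = S uₙ - uₙ` if it flips, where `S` sums over the neighbours.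

A flip forces the next letter to have the other type and the opposite exponent, so perpetual
flipping means that the sequence is eventually `…hv⁻¹hv⁻¹`; this preserves a quadratic form, which
must vanish on the shrinking orbit, and then `θ` is one of the excluded eigenvectors. Hence
non-flipping steps recur. At such a step each active vertex dominates its neighbours, and as every
vertex has two neighbours this domination propagates backwards through flips, so it holds at all
times and makes `uₙ` decrease. At a non-flipping step an active vertex also loses at least the value
of any of its neighbours; these losses tend to `0`, and domination carries the limit `0` over to the
other side of the bipartition.
-/

section Sequences

open Filter Topology

lemma frequently_lt_of_forall_exists_lt {r : ℕ → ℝ} (hpos : ∀ n, 0 < r n)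
    (hr : ∀ ε, 0 < ε → ∃ n, r n < ε) {ε : ℝ} (hε : 0 < ε) : ∃ᶠ n in atTop, r n < ε := by
  rw [Nat.frequently_atTop_iff_infinite]
  intro hfin
  obtain ⟨m, hm, hmin⟩ := Set.exists_min_image _ r hfin (hr ε hε)
  obtain ⟨n, hn⟩ := hr (r m) (hpos m)
  exact (hmin n (hn.trans hm)).not_gt hn

lemma exists_frequently_and_eq {ι : Type*} {f : Filter ι} {p : ι → Prop} (hp : ∃ᶠ n in f, p n)
    (b : ι → Bool) : ∃ c, ∃ᶠ n in f, p n ∧ b n = c := by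
  have hsplit : ∃ᶠ n in f, (p n ∧ b n = true) ∨ (p n ∧ b n = false) :=
    hp.mono fun n hn => by cases b n <;> simp [hn]
  rcases frequently_or_distrib.mp hsplit with h | h
  exacts [⟨true, h⟩, ⟨false, h⟩]

lemma tendsto_zero_of_antitone_of_frequently_le {u a : ℕ → ℝ} (hu : Antitone u)
    (hnonneg : ∀ n, 0 ≤ u n) (ha : Tendsto a atTop (𝓝 0)) (hle : ∃ᶠ n in atTop, u n ≤ a n) :
    Tendsto u atTop (𝓝 0) := by
  have hbdd : BddBelow (Set.range u) := ⟨0, Set.forall_mem_range.mpr hnonneg⟩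
  have hlim : Tendsto u atTop (𝓝 (⨅ n, u n)) := tendsto_atTop_ciInf hu hbdd
  have hinf_le : (⨅ n, u n) - 0 ≤ 0 :=
    le_of_tendsto_of_frequently (hlim.sub ha) (hle.mono fun _ h => sub_nonpos.mpr h)
  rwa [le_antisymm (by simpa using hinf_le) (le_ciInf hnonneg)] at hlim

end Sequences

section Signs

open SignType

lemma sign_eq_neg_sign_of_mul_neg {x y : ℝ} (h : x * y < 0) : sign x = -sign y := by
  have hprod : sign x * sign y = -1 := by rw [← sign_mul, sign_neg h]
  generalize sign x = s, sign y = t at hprod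
  decide +revert

lemma sign_eq_sign_of_mul_pos {x y : ℝ} (h : 0 < x * y) : sign x = sign y := by
  have hneg : x * -y < 0 := by simpa using h
  rw [sign_eq_neg_sign_of_mul_neg hneg, Left.sign_neg, neg_neg]

lemma sign_units_mul (ε : ℤˣ) (x : ℝ) : (sign (ε * x) : ℝ) = ε * sign x := by
  rcases Int.units_eq_one_or ε with rfl | rfl <;> simp [Left.sign_neg]

lemma coe_sign_ne_zero {x : ℝ} (hx : x ≠ 0) : (sign x : ℝ) ≠ 0 := by
  rcases hx.lt_or_gt with h | h <;> simp [h]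

end Signs

lemma units_cast_mul_self (ε : ℤˣ) : (ε : ℝ) * ε = 1 := by
  rcases Int.units_eq_one_or ε with rfl | rfl <;> simp

lemma abs_units_cast_mul (ε : ℤˣ) (x : ℝ) : |(ε : ℝ) * x| = |x| := by
  rcases Int.units_eq_one_or ε with rfl | rfl <;> simp

section Shear

variable {l x z : ℝ}

lemma sq_le_shear_mul (hl : 2 ≤ l) (h : 0 < x * z ∨ |x| ≤ |z|) : z ^ 2 ≤ (x + l * z) * z := by
  have hxz : -z ^ 2 ≤ x * z := by
    rcases h with h | h
    · nlinarith [sq_nonneg z]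
    · have : |x * z| ≤ z ^ 2 := by
        rw [abs_mul, ← sq_abs z, sq]
        gcongr
      exact (abs_le.mp this).1
  nlinarith [sq_nonneg z]

lemma abs_le_abs_shear_right (hl : 2 ≤ l) (hz : z ≠ 0) (h : 0 < x * z ∨ |x| ≤ |z|) :
    |z| ≤ |x + l * z| := by
  refine le_of_mul_le_mul_right ?_ (abs_pos.mpr hz)
  calc |z| * |z| = z ^ 2 := by rw [← sq, sq_abs]
    _ ≤ (x + l * z) * z := sq_le_shear_mul hl h
    _ ≤ |x + l * z| * |z| := by rw [← abs_mul]; exact le_abs_self _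

lemma abs_le_abs_shear_left (hl : 2 ≤ l) (hz : z ≠ 0) (h : 0 < x * z ∨ |x| ≤ |z|) :
    |x| ≤ |x + l * z| := by
  rcases h with hpos | hle
  · refine sq_le_sq.mp ?_
    nlinarith [mul_pos (show (0 : ℝ) < l by linarith) hpos, sq_nonneg (l * z)]
  · exact hle.trans (abs_le_abs_shear_right hl hz (.inr hle))

lemma abs_sq_add_sq_add_mul_lt {δ : ℝ} (hl : 0 ≤ l) (hx : |x| < δ) (hz : |z| < δ) :
    |x ^ 2 + z ^ 2 + l * (x * z)| < (2 + l) * δ ^ 2 := by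
  have hx2 : x ^ 2 < δ ^ 2 := sq_lt_sq.mpr (hx.trans_le (le_abs_self δ))
  have hz2 : z ^ 2 < δ ^ 2 := sq_lt_sq.mpr (hz.trans_le (le_abs_self δ))
  have hxz : |x * z| ≤ δ ^ 2 := by
    rw [abs_mul, sq]
    exact mul_le_mul hx.le hz.le (abs_nonneg z) ((abs_nonneg x).trans hx.le)
  calc |x ^ 2 + z ^ 2 + l * (x * z)| ≤ |x ^ 2 + z ^ 2| + |l * (x * z)| := abs_add_le _ _
    _ = x ^ 2 + z ^ 2 + l * |x * z| := by
        rw [abs_of_nonneg (by positivity), abs_mul, abs_of_nonneg hl]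
    _ < δ ^ 2 + δ ^ 2 + l * δ ^ 2 :=
        add_lt_add_of_lt_of_le (add_lt_add hx2 hz2) (mul_le_mul_of_nonneg_left hxz hl)
    _ = (2 + l) * δ ^ 2 := by ring

end Shear

lemma mul_apply_not_eq (p : Bool → ℝ) (i j : Bool) : p i * p (!i) = p j * p (!j) := by
  cases i <;> cases j <;> simp [mul_comm]

/-- The quadratic form `x² + y² + λ ε x y`. For `ε = -1` it is the form preserved by
`ρ_λ(h v⁻¹)`, whose null vectors are the eigenvectors of that matrix. -/
def shearForm (l : ℝ) (ε : ℤˣ) (p : Bool → ℝ) : ℝ :=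
  p true ^ 2 + p false ^ 2 + l * (ε * (p true * p false))

lemma shearForm_eq (l : ℝ) (ε : ℤˣ) (p : Bool → ℝ) (i : Bool) :
    shearForm l ε p = p i ^ 2 + p (!i) ^ 2 + l * (ε * (p i * p (!i))) := by
  cases i
  · simp only [shearForm, Bool.not_false]; ring
  · rfl

lemma abs_shearForm_lt {l δ : ℝ} (hl : 0 ≤ l) (ε : ℤˣ) {p : Bool → ℝ} (hp : ∀ i, |p i| < δ) :
    |shearForm l ε p| < (2 + l) * δ ^ 2 := by
  have hε : |(ε : ℝ) * p false| < δ := (abs_units_cast_mul ε _).trans_lt (hp false)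
  convert abs_sq_add_sq_add_mul_lt hl (hp true) hε using 2
  rw [shearForm]
  linear_combination (-p false ^ 2) * units_cast_mul_self ε

/-- The orbit of a vector with coordinates `P 0 true = x`, `P 0 false = y` under a reduced word:
at time `n` the letter `h` (`b n = true`) or `v` (`b n = false`) is applied with exponent `e n`,
changing the active coordinate `b n` only. No point of the orbit lies on a coordinate axis. -/
structure IsShearOrbit (l : ℝ) (P : ℕ → Bool → ℝ) (b : ℕ → Bool) (e : ℕ → ℤˣ) : Prop where
  succ_active : ∀ n, P (n + 1) (b n) = P n (b n) + l * (e n * P n (!b n))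
  succ_inactive : ∀ n, P (n + 1) (!b n) = P n (!b n)
  reduced : ∀ n, b (n + 1) = b n → e (n + 1) = e n
  ne_zero : ∀ n i, P n i ≠ 0

/-- The orbit `P` comes arbitrarily close to the origin. -/
def IsShrinkingOrbit (P : ℕ → Bool → ℝ) : Prop :=
  ∀ δ : ℝ, 0 < δ → ∃ᶠ n in Filter.atTop, ∀ i, |P n i| < δ

/-- At time `n` the letter pushes the active coordinate away from zero, or the active coordinate is
not larger than the inactive one. -/
def IsExpandingAt (P : ℕ → Bool → ℝ) (b : ℕ → Bool) (e : ℕ → ℤˣ) (n : ℕ) : Prop :=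
  0 < P n (b n) * (e n * P n (!b n)) ∨ |P n (b n)| ≤ |P n (!b n)|

/-- The active coordinate changes sign at time `n`. -/
def SignFlip (P : ℕ → Bool → ℝ) (b : ℕ → Bool) (n : ℕ) : Prop :=
  P (n + 1) (b n) * P n (b n) < 0

namespace IsShearOrbit

open Filter

variable {l : ℝ} {P : ℕ → Bool → ℝ} {b : ℕ → Bool} {e : ℕ → ℤˣ} {n : ℕ}

lemma units_mul_ne_zero (hP : IsShearOrbit l P b e) (n : ℕ) : (e n : ℝ) * P n (!b n) ≠ 0 := by
  rw [← abs_ne_zero, abs_units_cast_mul, abs_ne_zero]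
  exact hP.ne_zero n _

lemma abs_le_abs_succ (hP : IsShearOrbit l P b e) (hl : 2 ≤ l) (h : IsExpandingAt P b e n)
    (i : Bool) : |P n i| ≤ |P (n + 1) i| := by
  rw [IsExpandingAt, ← abs_units_cast_mul (e n) (P n (!b n))] at h
  by_cases hi : i = b n
  · rw [hi, hP.succ_active]
    exact abs_le_abs_shear_left hl (hP.units_mul_ne_zero n) h
  · rw [Bool.eq_not.mpr hi, hP.succ_inactive]

lemma isExpandingAt_succ (hP : IsShearOrbit l P b e) (hl : 2 ≤ l) (h : IsExpandingAt P b e n) :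
    IsExpandingAt P b e (n + 1) := by
  have hz := hP.units_mul_ne_zero n
  rw [IsExpandingAt, ← abs_units_cast_mul (e n) (P n (!b n))] at h
  by_cases hb : b (n + 1) = b n
  · left
    rw [hb, hP.reduced n hb, hP.succ_active, hP.succ_inactive]
    exact (sq_pos_of_ne_zero hz).trans_le (sq_le_shear_mul hl h)
  · right
    rw [Bool.eq_not.mpr hb, Bool.not_not, hP.succ_inactive, hP.succ_active,
      ← abs_units_cast_mul (e n)]
    exact abs_le_abs_shear_right hl hz h

lemma not_isExpandingAt (hP : IsShearOrbit l P b e) (hl : 2 ≤ l) (hshr : IsShrinkingOrbit P)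
    (n : ℕ) : ¬ IsExpandingAt P b e n := by
  intro hn
  have hgrow : ∀ m, n ≤ m → IsExpandingAt P b e m ∧ |P n true| ≤ |P m true| := by
    intro m hm
    induction m, hm using Nat.le_induction with
    | base => exact ⟨hn, le_rfl⟩
    | succ m _ ih =>
      exact ⟨hP.isExpandingAt_succ hl ih.1, ih.2.trans (hP.abs_le_abs_succ hl ih.1 true)⟩
  obtain ⟨m, hm, hsmall⟩ :=
    frequently_atTop.mp (hshr _ (abs_pos.mpr (hP.ne_zero n true))) n
  exact (hsmall true).not_ge (hgrow m hm).2

lemma active_mul_units_mul_neg (hP : IsShearOrbit l P b e) (hl : 2 ≤ l)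
    (hshr : IsShrinkingOrbit P) (n : ℕ) : P n (b n) * (e n * P n (!b n)) < 0 := by
  have hnotpos : ¬ 0 < P n (b n) * (e n * P n (!b n)) := fun h =>
    hP.not_isExpandingAt hl hshr n (.inl h)
  exact (not_lt.mp hnotpos).lt_of_ne (mul_ne_zero (hP.ne_zero n _) (hP.units_mul_ne_zero n))

lemma frequently_letter_eq (hP : IsShearOrbit l P b e) (hshr : IsShrinkingOrbit P) (c : Bool) :
    ∃ᶠ n in atTop, b n = c := by
  rw [frequently_atTop]
  intro N
  by_contra! hne
  have hconst : ∀ n, N ≤ n → P n c = P N c := by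
    intro n hn
    induction n, hn using Nat.le_induction with
    | base => rfl
    | succ n hn ih => rw [← ih, Bool.eq_not.mpr (hne n hn).symm, hP.succ_inactive]
  obtain ⟨n, hn, hsmall⟩ := frequently_atTop.mp (hshr _ (abs_pos.mpr (hP.ne_zero N c))) N
  exact (hsmall c).ne (by rw [hconst n hn])

lemma exponent_succ_of_signFlip (hP : IsShearOrbit l P b e) (hl : 2 ≤ l)
    (hshr : IsShrinkingOrbit P) (hflip : SignFlip P b n) : e (n + 1) = -e n := by
  rw [← Int.units_ne_iff_eq_neg]
  intro he
  have hnow := hP.active_mul_units_mul_neg hl hshr n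
  have hnext : P (n + 1) (b n) * (e n * P n (!b n)) < 0 := by
    have h := hP.active_mul_units_mul_neg hl hshr (n + 1)
    rwa [mul_left_comm, mul_apply_not_eq (P (n + 1)) (b (n + 1)) (b n), hP.succ_inactive, he,
      mul_left_comm] at h
  refine (mul_pos_of_neg_of_neg hnext hnow).not_gt ?_
  calc P (n + 1) (b n) * (e n * P n (!b n)) * (P n (b n) * (e n * P n (!b n)))
      = P (n + 1) (b n) * P n (b n) * (e n * P n (!b n)) ^ 2 := by ring
    _ < 0 := mul_neg_of_neg_of_pos hflip (sq_pos_of_ne_zero (hP.units_mul_ne_zero n))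

lemma letter_succ_of_signFlip (hP : IsShearOrbit l P b e) (hl : 2 ≤ l)
    (hshr : IsShrinkingOrbit P) (hflip : SignFlip P b n) : b (n + 1) = !b n := by
  rw [Bool.eq_not]
  intro hb
  have hne : e n ≠ e (n + 1) := by
    rw [Int.units_ne_iff_eq_neg, hP.exponent_succ_of_signFlip hl hshr hflip, neg_neg]
  exact hne (hP.reduced n hb).symm

lemma shearForm_succ_of_signFlip (hP : IsShearOrbit l P b e) (hl : 2 ≤ l)
    (hshr : IsShrinkingOrbit P) (hflip : SignFlip P b n) :
    shearForm l (e (n + 1)) (P (n + 1)) = shearForm l (e n) (P n) := by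
  rw [hP.exponent_succ_of_signFlip hl hshr hflip, shearForm_eq l _ _ (b n),
    shearForm_eq l _ _ (b n), hP.succ_active, hP.succ_inactive]
  push_cast
  ring

lemma shearForm_eq_zero_of_forall_signFlip (hP : IsShearOrbit l P b e) (hl : 2 ≤ l)
    (hshr : IsShrinkingOrbit P) {N : ℕ} (hflip : ∀ n, N ≤ n → SignFlip P b n) {n : ℕ}
    (hn : N ≤ n) : shearForm l (e n) (P n) = 0 := by
  by_contra hne
  have hconst : ∀ m, n ≤ m → shearForm l (e m) (P m) = shearForm l (e n) (P n) := by
    intro m hm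
    induction m, hm using Nat.le_induction with
    | base => rfl
    | succ m hm ih => rw [← ih, hP.shearForm_succ_of_signFlip hl hshr (hflip m (hn.trans hm))]
  set q := shearForm l (e n) (P n)
  have hq : 0 < |q| / (2 + l) := by positivity
  obtain ⟨m, hm, hsmall⟩ := frequently_atTop.mp (hshr _ (Real.sqrt_pos.mpr hq)) n
  have hlt := abs_shearForm_lt (zero_le_two.trans hl) (e m) hsmall
  rw [hconst m hm, Real.sq_sqrt hq.le, mul_div_cancel₀ _ (by linarith)] at hlt
  exact lt_irrefl _ hlt

lemma frequently_not_signFlip (hP : IsShearOrbit l P b e) (hl : 2 ≤ l)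
    (hshr : IsShrinkingOrbit P) (hform : ∀ n, shearForm l (-1) (P n) ≠ 0) :
    ∃ᶠ n in atTop, ¬ SignFlip P b n := by
  rw [frequently_atTop]
  intro N
  by_contra! hflip
  have hzero : ∀ n, N ≤ n → shearForm l (e n) (P n) = 0 := fun _ =>
    hP.shearForm_eq_zero_of_forall_signFlip hl hshr hflip
  rcases Int.units_eq_one_or (e N) with he | he
  · refine hform (N + 1) ?_
    rw [← he, ← hP.exponent_succ_of_signFlip hl hshr (hflip N le_rfl)]
    exact hzero _ N.le_succ
  · exact hform N (he ▸ hzero N le_rfl)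

end IsShearOrbit

section AdjSum

variable {V : Type} {G : SimpleGraph V} {u : V → ℝ} {v w w' : V}

lemma add_le_adjSum (hfin : (G.neighborSet v).Finite) (hu : ∀ z, 0 ≤ u z) (hw : G.Adj v w)
    (hw' : G.Adj v w') (hne : w ≠ w') : u w + u w' ≤ adjSum G u v := by
  classical
  rw [adjSum, finsum_mem_eq_finite_toFinset_sum _ hfin, ← Finset.sum_pair hne]
  refine Finset.sum_le_sum_of_subset_of_nonneg ?_ fun z _ _ => hu z
  simp [Set.insert_subset_iff, hw, hw']

lemma le_adjSum (hfin : (G.neighborSet v).Finite) (hu : ∀ z, 0 ≤ u z) (hw : G.Adj v w) :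
    u w ≤ adjSum G u v := by
  rw [adjSum, finsum_mem_eq_finite_toFinset_sum _ hfin]
  exact Finset.single_le_sum (fun z _ => hu z) (by simpa using hw)

lemma adjSum_nonneg (hu : ∀ z, 0 ≤ u z) : 0 ≤ adjSum G u v :=
  finsum_nonneg fun z => finsum_nonneg fun _ => hu z

lemma adjSum_eq_mul_adjSum {f : V → ℝ} {c : ℝ} (h : ∀ w, G.Adj v w → f w = c * u w) :
    adjSum G f v = c * adjSum G u v := by
  rw [adjSum, adjSum, mul_finsum_mem]
  exact finsum_mem_congr rfl h

lemma neighborSet_nontrivial_of_valance_ne_one [Nontrivial V] (hG : G.Preconnected)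
    (hv : valance G v ≠ 1) : (G.neighborSet v).Nontrivial := by
  by_contra hsub
  exact hv (Set.ncard_eq_one.mpr (Set.exists_eq_singleton_iff_nonempty_subsingleton.mpr
    ⟨hG.exists_adj_of_nontrivial v, Set.not_nontrivial_iff.mp hsub⟩))

end AdjSum

/-- The moduli `u n = |Υ^{g n} f|` of a survivor `f` on a graph with bipartition `χ`: the letter
applied at time `n` acts on the vertices of colour `b n`, and `F n` says that it flips their
signs. -/
structure IsSurvivorModulus {V : Type} (G : SimpleGraph V) (χ : G.Coloring Bool) (b : ℕ → Bool)
    (F : ℕ → Prop) (u : ℕ → V → ℝ) : Prop where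
  nonneg : ∀ n v, 0 ≤ u n v
  succ_inactive : ∀ n v, χ v ≠ b n → u (n + 1) v = u n v
  succ_flip : ∀ n v, F n → χ v = b n → u (n + 1) v = adjSum G (u n) v - u n v
  succ_not_flip : ∀ n v, ¬ F n → χ v = b n → u (n + 1) v = u n v - adjSum G (u n) v
  alternates : ∀ n, F n → b (n + 1) = !b n

namespace IsSurvivorModulus

open Filter Topology

variable {V : Type} {G : SimpleGraph V} {χ : G.Coloring Bool} {b : ℕ → Bool} {F : ℕ → Prop}
  {u : ℕ → V → ℝ} {n : ℕ} {v w : V}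

lemma le_active_of_not_flip (hu : IsSurvivorModulus G χ b F u)
    (hfin : ∀ v, (G.neighborSet v).Finite) (hF : ¬ F n) (hvw : G.Adj v w) (hw : χ w = b n) :
    u n v ≤ u n w := by
  have hsum : u n v ≤ adjSum G (u n) w := le_adjSum (hfin w) (hu.nonneg n) hvw.symm
  linarith [hu.succ_not_flip n w hF hw, hu.nonneg (n + 1) w]

lemma le_active_of_flip (hu : IsSurvivorModulus G χ b F u)
    (hfin : ∀ v, (G.neighborSet v).Finite) (hnt : ∀ v, (G.neighborSet v).Nontrivial) (hF : F n)
    (hnext : ∀ v w, G.Adj v w → χ w = b (n + 1) → u (n + 1) v ≤ u (n + 1) w)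
    (hvw : G.Adj v w) (hw : χ w = b n) : u n v ≤ u n w := by
  obtain ⟨v', hwv', hne⟩ := (hnt w).exists_ne v
  have hv' : χ v' ≠ b n := fun h => χ.valid hwv' (hw.trans h.symm)
  have hsum : u n v + u n v' ≤ adjSum G (u n) w :=
    add_le_adjSum (hfin w) (hu.nonneg n) hvw.symm hwv' hne.symm
  have hle : u (n + 1) w ≤ u (n + 1) v' :=
    hnext w v' hwv' (by rw [hu.alternates n hF, Bool.eq_not.mpr hv'])
  linarith [hu.succ_flip n w hF hw, hu.succ_inactive n v' hv']

lemma le_active (hu : IsSurvivorModulus G χ b F u) (hfin : ∀ v, (G.neighborSet v).Finite)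
    (hnt : ∀ v, (G.neighborSet v).Nontrivial) (hF : ∃ᶠ n in atTop, ¬ F n)
    (hvw : G.Adj v w) (hw : χ w = b n) : u n v ≤ u n w := by
  obtain ⟨m, hnm, hFm⟩ := frequently_atTop.mp hF n
  induction hnm using Nat.decreasingInduction generalizing v w with
  | self => exact hu.le_active_of_not_flip hfin hFm hvw hw
  | of_succ k _ ih =>
    by_cases hFk : F k
    · exact hu.le_active_of_flip hfin hnt hFk (fun _ _ => ih) hvw hw
    · exact hu.le_active_of_not_flip hfin hFk hvw hw

lemma antitone (hu : IsSurvivorModulus G χ b F u) (hfin : ∀ v, (G.neighborSet v).Finite)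
    (hnt : ∀ v, (G.neighborSet v).Nontrivial) (hF : ∃ᶠ n in atTop, ¬ F n) (v : V) :
    Antitone fun n => u n v := by
  refine antitone_nat_of_succ_le fun n => ?_
  by_cases hv : χ v = b n
  · by_cases hFn : F n
    · obtain ⟨w, hvw⟩ := (hnt v).nonempty
      have hw : χ w ≠ b n := fun h => χ.valid hvw (hv.trans h.symm)
      have hw' : χ w = b (n + 1) := by rw [hu.alternates n hFn, Bool.eq_not.mpr hw]
      calc u (n + 1) v ≤ u (n + 1) w := hu.le_active hfin hnt hF hvw hw'
        _ = u n w := hu.succ_inactive n w hw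
        _ ≤ u n v := hu.le_active hfin hnt hF hvw.symm hv
    · rw [hu.succ_not_flip n v hFn hv]
      exact sub_le_self _ (adjSum_nonneg (hu.nonneg n))
  · exact (hu.succ_inactive n v hv).le

lemma tendsto_sub_succ (hu : IsSurvivorModulus G χ b F u) (hv : Antitone fun n => u n v) :
    Tendsto (fun n => u n v - u (n + 1) v) atTop (𝓝 0) := by
  have hbdd : BddBelow (Set.range fun n => u n v) :=
    ⟨0, Set.forall_mem_range.mpr fun n => hu.nonneg n v⟩
  have hlim := tendsto_atTop_ciInf hv hbdd
  simpa using hlim.sub (hlim.comp (tendsto_add_atTop_nat 1))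

lemma tendsto_zero_of_frequently_not_flip (hu : IsSurvivorModulus G χ b F u)
    (hfin : ∀ v, (G.neighborSet v).Finite) (hnt : ∀ v, (G.neighborSet v).Nontrivial) {c : Bool}
    (hc : ∃ᶠ n in atTop, ¬ F n ∧ b n = c) (hv : χ v ≠ c) :
    Tendsto (fun n => u n v) atTop (𝓝 0) := by
  have hanti := hu.antitone hfin hnt (hc.mono fun _ h => h.1)
  obtain ⟨w, hvw⟩ := (hnt v).nonempty
  have hw : χ w = c := by
    rw [Bool.eq_not.mpr (χ.valid hvw).symm, Bool.eq_not.mpr hv, Bool.not_not]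
  refine tendsto_zero_of_antitone_of_frequently_le (hanti v) (fun n => hu.nonneg n v)
    (hu.tendsto_sub_succ (hanti w)) (hc.mono ?_)
  rintro n ⟨hFn, hbn⟩
  rw [hu.succ_not_flip n w hFn (hw.trans hbn.symm), sub_sub_cancel]
  exact le_adjSum (hfin w) (hu.nonneg n) hvw.symm

lemma tendsto_zero (hu : IsSurvivorModulus G χ b F u) (hfin : ∀ v, (G.neighborSet v).Finite)
    (hnt : ∀ v, (G.neighborSet v).Nontrivial) (hF : ∃ᶠ n in atTop, ¬ F n)
    (hb : ∀ c, ∃ᶠ n in atTop, b n = c) (v : V) : Tendsto (fun n => u n v) atTop (𝓝 0) := by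
  obtain ⟨c, hc⟩ := exists_frequently_and_eq hF b
  by_cases hv : χ v = c
  · obtain ⟨w, hvw⟩ := (hnt v).nonempty
    have hw : χ w ≠ c := fun h => χ.valid hvw (hv.trans h.symm)
    exact tendsto_zero_of_antitone_of_frequently_le (hu.antitone hfin hnt hF v)
      (fun n => hu.nonneg n v) (hu.tendsto_zero_of_frequently_not_flip hfin hnt hc hw)
      ((hb (χ w)).mono fun _ hbn => hu.le_active hfin hnt hF hvw hbn.symm)
  · exact hu.tendsto_zero_of_frequently_not_flip hfin hnt hc hv

end IsSurvivorModulus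

/-- The orbit of a function on the vertices under the word with letters `b n` and exponents `e n`:
at time `n` the neighbour sums are added, with sign `e n`, at the vertices of colour `b n`. -/
structure IsAdjacencyOrbit {V : Type} (G : SimpleGraph V) (χ : G.Coloring Bool) (b : ℕ → Bool)
    (e : ℕ → ℤˣ) (f : ℕ → V → ℝ) : Prop where
  succ_active : ∀ n v, χ v = b n → f (n + 1) v = f n v + e n * adjSum G (f n) v
  succ_inactive : ∀ n v, χ v ≠ b n → f (n + 1) v = f n v

/-- At each vertex `f` vanishes or has the sign of the coordinate of `p` given by the colour. -/
def SignsAgree {V : Type} {G : SimpleGraph V} (χ : G.Coloring Bool) (p : Bool → ℝ)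
    (f : V → ℝ) : Prop :=
  ∀ v, f v = SignType.sign (p (χ v)) * |f v|

namespace IsAdjacencyOrbit

open SignType

variable {V : Type} {G : SimpleGraph V} {χ : G.Coloring Bool} {l : ℝ} {P : ℕ → Bool → ℝ}
  {b : ℕ → Bool} {e : ℕ → ℤˣ} {f : ℕ → V → ℝ} {n : ℕ} {v : V}

lemma succ_eq_sign_mul (hf : IsAdjacencyOrbit G χ b e f)
    (hneg : P n (b n) * (e n * P n (!b n)) < 0) (hsign : SignsAgree χ (P n) (f n))
    (hv : χ v = b n) :
    f (n + 1) v = sign (P n (b n)) * (|f n v| - adjSum G (fun w => |f n w|) v) := by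
  have hsum : adjSum G (f n) v = sign (P n (!b n)) * adjSum G (fun w => |f n w|) v := by
    refine adjSum_eq_mul_adjSum fun w hvw => ?_
    have hw : χ w = !b n := by rw [← hv]; exact Bool.eq_not.mpr (χ.valid hvw).symm
    rw [← hw]
    exact hsign w
  have hopp : (sign (P n (b n)) : ℝ) = -(e n * sign (P n (!b n))) := by
    rw [sign_eq_neg_sign_of_mul_neg hneg, ← sign_units_mul]
    simp
  have hfv : f n v = sign (P n (b n)) * |f n v| := hv ▸ hsign v
  rw [hf.succ_active n v hv, hsum]
  linear_combination hfv + adjSum G (fun w => |f n w|) v * hopp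

lemma isSurvivorModulus (hf : IsAdjacencyOrbit G χ b e f) (hP : IsShearOrbit l P b e)
    (hl : 2 ≤ l) (hshr : IsShrinkingOrbit P) (hsign : ∀ n, SignsAgree χ (P n) (f n)) :
    IsSurvivorModulus G χ b (SignFlip P b) fun n v => |f n v| where
  nonneg n v := abs_nonneg _
  succ_inactive n v hv := by rw [hf.succ_inactive n v hv]
  succ_flip n v hflip hv := by
    have hsucc := hf.succ_eq_sign_mul (hP.active_mul_units_mul_neg hl hshr n) (hsign n) hv
    have hnext : f (n + 1) v = -sign (P n (b n)) * |f (n + 1) v| := by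
      simpa [hv, sign_eq_neg_sign_of_mul_neg hflip] using hsign (n + 1) v
    refine mul_left_cancel₀ (coe_sign_ne_zero (hP.ne_zero n (b n))) ?_
    linear_combination hnext - hsucc
  succ_not_flip n v hflip hv := by
    have hsucc := hf.succ_eq_sign_mul (hP.active_mul_units_mul_neg hl hshr n) (hsign n) hv
    have hpos : 0 < P (n + 1) (b n) * P n (b n) :=
      (not_lt.mp hflip).lt_of_ne' (mul_ne_zero (hP.ne_zero _ _) (hP.ne_zero _ _))
    have hnext : f (n + 1) v = sign (P n (b n)) * |f (n + 1) v| := by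
      simpa only [hv, sign_eq_sign_of_mul_pos hpos] using hsign (n + 1) v
    refine mul_left_cancel₀ (coe_sign_ne_zero (hP.ne_zero n (b n))) ?_
    linear_combination hsucc - hnext
  alternates n hflip := hP.letter_succ_of_signFlip hl hshr hflip

end IsAdjacencyOrbit

/-- The index in `ℝ²` of the coordinate changed by the letter `i`: `h` (`true`) changes the first
coordinate and `v` (`false`) the second. -/
def axis (i : Bool) : Fin 2 := if i then 0 else 1

section PlaneAction

variable {l : ℝ} {x : Fin 2 → ℝ} {g : ℕ → F2}

lemma act_mul (l : ℝ) (k m : F2) (x : Fin 2 → ℝ) : act l (k * m) x = act l k (act l m x) := by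
  simp only [act, map_mul, Matrix.SpecialLinearGroup.coe_mul, Matrix.mulVec_mulVec]

lemma act_smul (l : ℝ) (k : F2) (c : ℝ) (x : Fin 2 → ℝ) : act l k (c • x) = c • act l k x :=
  Matrix.mulVec_smul _ c x

lemma hmat_inv (l : ℝ) : (hmat l)⁻¹ = hmat (-l) := by
  refine inv_eq_of_mul_eq_one_right (Subtype.ext ?_)
  rw [Matrix.SpecialLinearGroup.coe_mul]
  simp [hmat, Matrix.one_fin_two]

lemma vmat_inv (l : ℝ) : (vmat l)⁻¹ = vmat (-l) := by
  refine inv_eq_of_mul_eq_one_right (Subtype.ext ?_)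
  rw [Matrix.SpecialLinearGroup.coe_mul]
  simp [vmat, Matrix.one_fin_two]

lemma rho_of_zpow (l : ℝ) (i : Bool) (ε : ℤˣ) :
    rho l (FreeGroup.of i ^ (ε : ℤ)) = if i then hmat (ε * l) else vmat (ε * l) := by
  rcases Int.units_eq_one_or ε with rfl | rfl <;> cases i <;> simp [rho, hmat_inv, vmat_inv]

lemma act_of_zpow_active (l : ℝ) (i : Bool) (ε : ℤˣ) (x : Fin 2 → ℝ) :
    act l (FreeGroup.of i ^ (ε : ℤ)) x (axis i) = x (axis i) + l * (ε * x (axis !i)) := by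
  rw [act, rho_of_zpow]
  cases i <;> simp [hmat, vmat, axis, Matrix.vecHead, Matrix.vecTail] <;> ring

lemma act_of_zpow_inactive (l : ℝ) (i : Bool) (ε : ℤˣ) (x : Fin 2 → ℝ) :
    act l (FreeGroup.of i ^ (ε : ℤ)) x (axis !i) = x (axis !i) := by
  rw [act, rho_of_zpow]
  cases i <;> simp [hmat, vmat, axis, Matrix.vecHead, Matrix.vecTail]

lemma act_gh_mul_gv_inv (l : ℝ) (x : Fin 2 → ℝ) :
    act l (gh * gv⁻¹) x = ![x 0 + l * (x 1 - l * x 0), x 1 - l * x 0] := by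
  have hgh : rho l gh = hmat l := by simp [rho, gh]
  have hgv : rho l gv⁻¹ = vmat (-l) := by simp [rho, gv, vmat_inv]
  rw [act_mul, act, act, hgh, hgv]
  ext i
  fin_cases i <;> simp [hmat, vmat, Matrix.vecHead, Matrix.vecTail, sub_eq_neg_add, mul_comm]

lemma exists_act_gh_mul_gv_inv_eq_smul (hx : x 1 ≠ 0)
    (hform : shearForm l (-1) (fun i => x (axis i)) = 0) :
    ∃ c : ℝ, act l (gh * gv⁻¹) x = c • x := by
  have hnull : x 0 ^ 2 + x 1 ^ 2 - l * (x 0 * x 1) = 0 := by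
    simpa [shearForm, axis, sub_eq_add_neg] using hform
  refine ⟨(x 1 - l * x 0) / x 1, ?_⟩
  rw [act_gh_mul_gv_inv]
  ext i
  fin_cases i
  · simp only [Fin.zero_eta, Matrix.cons_val_zero, Pi.smul_apply, smul_eq_mul]
    field_simp
    linear_combination l * hnull
  · simp [div_mul_cancel₀ _ hx]

lemma Renormalizable.shearForm_act_ne_zero (hx : Renormalizable l x) {k : F2}
    (hk : act l k x 1 ≠ 0) : shearForm l (-1) (fun i => act l k x (axis i)) ≠ 0 := by
  intro hform
  obtain ⟨c, hc⟩ := exists_act_gh_mul_gv_inv_eq_smul hk hform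
  refine hx.2 k⁻¹ c ?_
  rw [inv_inv, act_mul, act_mul, hc, act_smul, ← act_mul, inv_mul_cancel]
  simp [act]

lemma exists_eq_of_zpow_of_mem_gens {k : F2} (hk : k ∈ gens) :
    ∃ (i : Bool) (ε : ℤˣ), k = FreeGroup.of i ^ (ε : ℤ) := by
  rcases hk with rfl | rfl | rfl | rfl
  exacts [⟨true, 1, by simp [gh]⟩, ⟨false, 1, by simp [gv]⟩, ⟨true, -1, by simp [gh]⟩,
    ⟨false, -1, by simp [gv]⟩]

lemma IsGeodesicRay.exists_letters (hg : IsGeodesicRay g) :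
    ∃ (b : ℕ → Bool) (e : ℕ → ℤˣ), (∀ n, g (n + 1) = FreeGroup.of (b n) ^ (e n : ℤ) * g n) ∧
      ∀ n, b (n + 1) = b n → e (n + 1) = e n := by
  choose b e hstep using fun n => exists_eq_of_zpow_of_mem_gens (hg.2.1 n)
  have hsucc : ∀ n, g (n + 1) = FreeGroup.of (b n) ^ (e n : ℤ) * g n := fun n =>
    mul_inv_eq_iff_eq_mul.mp (hstep n)
  refine ⟨b, e, hsucc, fun n hb => ?_⟩
  by_contra he
  refine hg.2.2 n ?_
  rw [hsucc (n + 1), hsucc n, hb, Int.units_ne_iff_eq_neg.mp he]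
  simp

lemma ne_zero_of_mem_quad {s : SP} (hx : x ∈ Quad s) (i : Bool) : x (axis i) ≠ 0 := by
  obtain ⟨h0, h1⟩ := hx
  cases i <;> simp only [axis] <;> split_ifs at h0 h1 <;> simp [ne_of_lt, ne_of_gt, *]

lemma isShearOrbit_act {b : ℕ → Bool} {e : ℕ → ℤˣ} {s : ℕ → SP}
    (hstep : ∀ n, g (n + 1) = FreeGroup.of (b n) ^ (e n : ℤ) * g n)
    (hred : ∀ n, b (n + 1) = b n → e (n + 1) = e n) (hs : ∀ n, act l (g n) x ∈ Quad (s n)) :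
    IsShearOrbit l (fun n i => act l (g n) x (axis i)) b e where
  succ_active n := by rw [hstep, act_mul, act_of_zpow_active]
  succ_inactive n := by rw [hstep, act_mul, act_of_zpow_inactive]
  reduced := hred
  ne_zero n := ne_zero_of_mem_quad (hs n)

lemma abs_apply_axis_le_nrm (x : Fin 2 → ℝ) (i : Bool) : |x (axis i)| ≤ nrm x := by
  refine Real.abs_le_sqrt ?_
  cases i <;> simp [axis, sq_nonneg]

lemma IsShrinkingSeq.isShrinkingOrbit (hgs : IsShrinkingSeq l g x)
    (hne : ∀ n, act l (g n) x 0 ≠ 0) :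
    IsShrinkingOrbit fun n i => act l (g n) x (axis i) := by
  intro δ hδ
  have hpos : ∀ n, 0 < nrm (act l (g n) x) := fun n =>
    (abs_pos.mpr (hne n)).trans_le (abs_apply_axis_le_nrm _ true)
  exact (frequently_lt_of_forall_exists_lt hpos hgs hδ).mono fun n hn i =>
    (abs_apply_axis_le_nrm _ i).trans_lt hn

end PlaneAction

section GraphAction

variable {V : Type} {G : SimpleGraph V} {A : Set V}

open scoped Classical in
/-- The colouring of a bipartite graph with value `true` on `A` and `false` on its complement. -/
def bipartColoring (hbip : BipartWith G A) : G.Coloring Bool :=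
  SimpleGraph.Coloring.mk (fun v => decide (v ∈ A)) fun {v w} hvw => by
    simp [hbip v w hvw]

lemma bipartColoring_apply_eq_true_iff {hbip : BipartWith G A} {v : V} :
    bipartColoring hbip v = true ↔ v ∈ A := by
  classical exact decide_eq_true_iff

lemma eq_sign_mul_abs {t y : ℝ} {σ : Bool} (ht : if σ then 0 < t else t < 0)
    (hy : y = 0 ∨ if σ then 0 < y else y < 0) : y = SignType.sign t * |y| := by
  rcases hy with rfl | hy
  · simp
  · cases σ
    · have hy' : y < 0 := hy
      simp [sign_neg (show t < 0 from ht), abs_of_neg hy']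
    · have hy' : 0 < y := hy
      simp [sign_pos (show 0 < t from ht), abs_of_pos hy']

lemma signsAgree_of_mem_quadV (hbip : BipartWith G A) {s : SP} {x : Fin 2 → ℝ} {f : V → ℝ}
    (hx : x ∈ Quad s) (hf : f ∈ QuadV A s) :
    SignsAgree (bipartColoring hbip) (fun i => x (axis i)) f := by
  intro v
  by_cases hv : v ∈ A
  · rw [bipartColoring_apply_eq_true_iff.mpr hv]
    exact eq_sign_mul_abs hx.1 (hf.1 v hv)
  · rw [Bool.eq_false_iff.mpr (mt bipartColoring_apply_eq_true_iff.mp hv)]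
    exact eq_sign_mul_abs hx.2 (hf.2 v hv)

lemma isAdjacencyOrbit_of_hop_vop (hbip : BipartWith G A) {U : F2 →* Equiv.Perm (V → ℝ)}
    (hUh : ∀ k : ℤ, ∀ f : V → ℝ, U (gh ^ k) f = Hop G A k f)
    (hUv : ∀ k : ℤ, ∀ f : V → ℝ, U (gv ^ k) f = Vop G A k f) (f : V → ℝ) {g : ℕ → F2}
    {b : ℕ → Bool} {e : ℕ → ℤˣ}
    (hstep : ∀ n, g (n + 1) = FreeGroup.of (b n) ^ (e n : ℤ) * g n) :
    IsAdjacencyOrbit G (bipartColoring hbip) b e fun n => U (g n) f := by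
  have hsucc : ∀ n, U (g (n + 1)) f = if b n then Hop G A (e n) (U (g n) f)
      else Vop G A (e n) (U (g n) f) := by
    intro n
    rw [hstep, map_mul, Equiv.Perm.mul_apply]
    cases b n
    exacts [hUv _ _, hUh _ _]
  constructor <;> intro n v hv <;> rw [hsucc] <;> cases hb : b n <;>
    simp_all [Hop, Vop, ← bipartColoring_apply_eq_true_iff (hbip := hbip)]

end GraphAction

theorem stmt19_general {V : Type} (G : SimpleGraph V) (A : Set V)
    (hfin : ∀ v, (G.neighborSet v).Finite) (hnt : ∀ v, (G.neighborSet v).Nontrivial)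
    (hbip : BipartWith G A) (l : ℝ) (hl : 2 ≤ l) (x : Fin 2 → ℝ) (hren : Renormalizable l x)
    (g : ℕ → F2) (hg : IsGeodesicRay g) (hgs : IsShrinkingSeq l g x)
    (s : ℕ → SP) (hs : ∀ n, act l (g n) x ∈ Quad (s n))
    (U : F2 →* Equiv.Perm (V → ℝ))
    (hUh : ∀ k : ℤ, ∀ f : V → ℝ, U (gh ^ k) f = Hop G A k f)
    (hUv : ∀ k : ℤ, ∀ f : V → ℝ, U (gv ^ k) f = Vop G A k f)
    (f : V → ℝ) (hsurv : ∀ n : ℕ, U (g n) f ∈ QuadV A (s n)) :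
    ∀ v : V, (Antitone fun n => |U (g n) f v|) ∧
      Filter.Tendsto (fun n => |U (g n) f v|) Filter.atTop (nhds 0) := by
  obtain ⟨b, e, hstep, hred⟩ := hg.exists_letters
  have horbit := isShearOrbit_act hstep hred hs
  have hshrink := hgs.isShrinkingOrbit fun n => horbit.ne_zero n true
  have hnonflip := horbit.frequently_not_signFlip hl hshrink fun n =>
    hren.shearForm_act_ne_zero (horbit.ne_zero n false)
  have hmodulus := (isAdjacencyOrbit_of_hop_vop hbip hUh hUv f hstep).isSurvivorModulus horbit hl
    hshrink fun n => signsAgree_of_mem_quadV hbip (hs n) (hsurv n)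
  exact fun v => ⟨hmodulus.antitone hfin hnt hnonflip v,
    hmodulus.tendsto_zero hfin hnt hnonflip (horbit.frequently_letter_eq hshrink) v⟩

theorem stmt19 {V : Type} [Countable V] [Infinite V]
    (G : SimpleGraph V) (A : Set V)
    (hconn : G.Connected) (hval : BoundedValance G) (hbip : BipartWith G A)
    (hnoval1 : ∀ v : V, valance G v ≠ 1)
    (l : ℝ) (hl : 2 ≤ l) (x : Fin 2 → ℝ) (hx : x ∈ Circ)
    (hren : Renormalizable l x)
    (g : ℕ → F2) (hg : IsGeodesicRay g) (hgs : IsShrinkingSeq l g x)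
    (s : ℕ → SP) (hs : ∀ n, act l (g n) x ∈ Quad (s n))
    (U : F2 →* Equiv.Perm (V → ℝ))
    (hUh : ∀ k : ℤ, ∀ f : V → ℝ, U (gh ^ k) f = Hop G A k f)
    (hUv : ∀ k : ℤ, ∀ f : V → ℝ, U (gv ^ k) f = Vop G A k f)
    (f : V → ℝ) (hsurv : ∀ n : ℕ, U (g n) f ∈ QuadV A (s n)) :
    ∀ v : V, (Antitone fun n => |U (g n) f v|) ∧
      Filter.Tendsto (fun n => |U (g n) f v|) Filter.atTop (nhds 0) := by
  obtain ⟨_, hval⟩ := hval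
  exact stmt19_general G A (fun v => (hval v).1)
    (fun v => neighborSet_nontrivial_of_valance_ne_one hconn.preconnected (hnoval1 v))
    hbip l hl x hren g hg hgs s hs U hUh hUv f hsurv
end
end
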